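/- Let {φ_e}_{e∈E} be a conformal iterated function system in ℝⁿ with limit set J and coding map π. Suppose that J is not porous, or that there exists ζ ∈ closure(J) such that J is not porous at ζ. Let μ̃ be a Borel probability measure on E^ℕ (product topology, E discrete) that is invariant and ergodic under the left shift σ and has full topological support (μ̃(U) > 0 for every nonempty open U ⊆ E^ℕ). Then J is not porous at x for (μ̃∘π⁻¹)-almost every x ∈ J. -/

import Mathlib

/-!
Porosity of the limit set `J` at a single point with a dense symbolic orbit already forces uniform
porosity at every point of `closure J`; this contradicts either alternative of the hypothesis, and
by ergodicity and full support almost every point has a dense symbolic orbit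
(`ae_dense_shift_orbit`).

The spreading of porosity (`CIFS.IsCoding.exists_uniform_hole`) is a blow-up argument. Let
`x = π ω` with `ω` of dense orbit, let `ζ ∈ closure J` and let `r` be small. Some iterate of the
shift sends `ω` to a sequence coding a point `p ∈ J` within `r / 4` of `ζ`, and `x = φ_w p` for a
finite word `w`. By bounded distortion `φ_w` scales `B(p, r)` by a factor `M = ‖Dφ_w(p)‖`, up to the
constant `K`. A hole of `J` in a ball of radius comparable to `M r` around `x` has its center in
`φ_w(B(p, r / 4))`, and the mean value inequality shows that the preimage of the hole contains a
ball of radius comparable to `r`; this ball avoids `J` because `φ_w` maps `J` into `J`.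

That `φ_w(B(p, r / 4))` contains a ball of radius comparable to `M r` is proved by a variational
argument (`ball_subset_image_closedBall`) that uses neither the continuity of the derivatives nor
invariance of domain. The set of points of porosity is an `F_σ` (`measurableSet_porousAt`), which
allows the almost everywhere statement to be transferred through `π`.
-/


open Metric Set Filter

/-- `por A x r` is the porosity of the set `A` at the point `x` at scale `r`:
the supremum of all `c ≥ 0` such that some open ball of radius `c·r` is contained
in `B(x,r) ∖ A`. -/
noncomputable def por {X : Type*} [MetricSpace X] (A : Set X) (x : X) (r : ℝ) : ℝ :=
  sSup {c : ℝ | 0 ≤ c ∧ ∃ y : X, Metric.ball y (c * r) ⊆ Metric.ball x r \ A}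

/-- `A` is porous at the point `x`. -/
def PorousAt {X : Type*} [MetricSpace X] (A : Set X) (x : X) : Prop :=
  ∃ c ∈ Set.Ioo (0 : ℝ) 1, ∃ r₀ > (0 : ℝ), ∀ r ∈ Set.Ioo (0 : ℝ) r₀, c ≤ por A x r

/-- `A` is porous. -/
def Porous {X : Type*} [MetricSpace X] (A : Set X) : Prop :=
  ∃ c ∈ Set.Ioo (0 : ℝ) 1, ∃ r₀ > (0 : ℝ), ∀ x ∈ A, ∀ r ∈ Set.Ioo (0 : ℝ) r₀, c ≤ por A x r

/-- A conformal iterated function system in `ℝⁿ` (single-vertex conformal GDMS):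
a compact connected set `X` equal to the closure of its interior, an open connected
set `W ⊇ X`, and injective `C¹` maps `φ e : W → W` with conformal (invertibly similar)
derivatives `D e`, mapping `X` into `X`, with Lipschitz constant at most `s ∈ (0,1)`
on `W`, satisfying the Open Set Condition. -/
structure CIFS (n : ℕ) (E : Type*) where
  X : Set (EuclideanSpace ℝ (Fin n))
  W : Set (EuclideanSpace ℝ (Fin n))
  φ : E → EuclideanSpace ℝ (Fin n) → EuclideanSpace ℝ (Fin n)
  D : E → EuclideanSpace ℝ (Fin n) → EuclideanSpace ℝ (Fin n) →L[ℝ] EuclideanSpace ℝ (Fin n)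
  s : ℝ
  hs : s ∈ Set.Ioo (0 : ℝ) 1
  hXcompact : IsCompact X
  hXconn : IsConnected X
  hXreg : X = closure (interior X)
  hWopen : IsOpen W
  hWconn : IsConnected W
  hXW : X ⊆ W
  hInj : ∀ e, Set.InjOn (φ e) W
  hMapsW : ∀ e, Set.MapsTo (φ e) W W
  hMapsX : ∀ e, Set.MapsTo (φ e) X X
  hDeriv : ∀ e, ∀ x ∈ W, HasFDerivAt (φ e) (D e x) x
  hConf : ∀ e, ∀ x ∈ W, IsConformalMap (D e x)
  hLip : ∀ e, LipschitzOnWith s.toNNReal (φ e) W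
  hOSC : ∀ a b : E, a ≠ b → Disjoint (φ a '' interior X) (φ b '' interior X)

namespace CIFS

variable {n : ℕ} {E : Type*}

/-- The composition `φ_ω = φ_{ω₁} ∘ ⋯ ∘ φ_{ωₙ}` associated to a finite word `ω`. -/
def compWord (S : CIFS n E) (ω : List E) :
    EuclideanSpace ℝ (Fin n) → EuclideanSpace ℝ (Fin n) :=
  ω.foldr (fun e g => S.φ e ∘ g) id

/-- The derivative of `φ_ω` at a point, computed by the chain rule. -/
noncomputable def derivWord (S : CIFS n E) :
    List E → EuclideanSpace ℝ (Fin n) →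
      (EuclideanSpace ℝ (Fin n) →L[ℝ] EuclideanSpace ℝ (Fin n))
  | [], _ => ContinuousLinearMap.id ℝ _
  | e :: ω, x => (S.D e (S.compWord ω x)).comp (S.derivWord ω x)

/-- The Bounded Distortion Property: there is `K ≥ 1` such that
`‖Dφ_ω(p)‖ ≤ K·‖Dφ_ω(q)‖` for every nonempty word `ω` and all `p, q ∈ W`. -/
def BDP (S : CIFS n E) : Prop :=
  ∃ K : ℝ, 1 ≤ K ∧ ∀ ω : List E, ω ≠ [] → ∀ p ∈ S.W, ∀ q ∈ S.W,
    ‖S.derivWord ω p‖ ≤ K * ‖S.derivWord ω q‖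

end CIFS

open MeasureTheory

/-! ### Porosity and holes -/

/-- `Hole A x r c`: the ball `B(x, r)` contains a ball of radius `c * r` disjoint from `A`. -/
def Hole {X : Type*} [MetricSpace X] (A : Set X) (x : X) (r c : ℝ) : Prop :=
  ∃ y : X, Metric.ball y (c * r) ⊆ Metric.ball x r \ A

theorem Hole.exists_of_lt_por {X : Type*} [MetricSpace X] {A : Set X} {x : X} {r c : ℝ}
    (hr : 0 < r) (h : c < por A x r) : Hole A x r c := by
  have hne : {c : ℝ | 0 ≤ c ∧ ∃ y : X, Metric.ball y (c * r) ⊆ Metric.ball x r \ A}.Nonempty :=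
    ⟨0, le_rfl, x, by simp⟩
  obtain ⟨d, ⟨_, y, hy⟩, hcd⟩ := exists_lt_of_lt_csSup hne h
  exact ⟨y, (ball_subset_ball (by gcongr)).trans hy⟩

/-- In a nontrivial normed space the set whose supremum defines `por` is bounded above, so `por`
is not a junk value. -/
theorem Hole.le_por {V : Type*} [NormedAddCommGroup V] [NormedSpace ℝ V] [Nontrivial V]
    {A : Set V} {x : V} {r c : ℝ} (hr : 0 < r) (hc : 0 ≤ c) (h : Hole A x r c) :
    c ≤ por A x r := by
  refine le_csSup ⟨1, ?_⟩ ⟨hc, h⟩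
  rintro d ⟨_, y, hy⟩
  by_contra! hd
  -- the points `y ± v` with `‖v‖ = r` lie in `B(y, d * r)`, yet are too far apart for `B(x, r)`
  obtain ⟨v, hv⟩ := exists_norm_eq V hr.le
  have hrd : r < d * r := by nlinarith
  have h1 : y + v ∈ ball x r := (hy (by simpa [hv] using hrd)).1
  have h2 : y - v ∈ ball x r := (hy (by simpa [hv, dist_eq_norm] using hrd)).1
  rw [mem_ball, dist_eq_norm] at h1 h2
  have h3 : ‖(y + v - x) - (y - v - x)‖ = 2 * r := by
    have : (y + v - x) - (y - v - x) = (2 : ℝ) • v := by rw [two_smul]; abel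
    rw [this, norm_smul, hv]; simp
  linarith [norm_sub_le (y + v - x) (y - v - x)]

theorem PorousAt.exists_hole {X : Type*} [MetricSpace X] {A : Set X} {x : X} (h : PorousAt A x) :
    ∃ c ∈ Set.Ioo (0 : ℝ) 1, ∃ r₀ > (0 : ℝ), ∀ r ∈ Set.Ioo (0 : ℝ) r₀, Hole A x r c := by
  obtain ⟨c, hc, r₀, hr₀, H⟩ := h
  exact ⟨c / 2, ⟨by linarith [hc.1], by linarith [hc.1, hc.2]⟩, r₀, hr₀, fun r hr =>
    Hole.exists_of_lt_por hr.1 (by linarith [H r hr, hc.1])⟩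

/-- The points at which `A` is porous form an `F_σ` set: having holes of relative size `c` at all
scales below `r₀` passes to the closure, at the cost of replacing `c` by `c / 2`. -/
theorem measurableSet_porousAt {V : Type*} [NormedAddCommGroup V] [NormedSpace ℝ V] [Nontrivial V]
    [MeasurableSpace V] [OpensMeasurableSpace V] (A : Set V) :
    MeasurableSet {x | PorousAt A x} := by
  have hset : {x | PorousAt A x} = ⋃ m : ℕ, closure {x | ∀ r ∈ Set.Ioo (0 : ℝ) (1 / (m + 2)),
      Hole A x r (1 / (m + 2))} := by
    ext x
    simp only [mem_ofPred_eq, mem_iUnion]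
    constructor
    · intro h
      obtain ⟨c, hc, r₀, hr₀, H⟩ := h.exists_hole
      obtain ⟨m, hm⟩ := exists_nat_one_div_lt (lt_min hc.1 hr₀)
      have hm2 : (1 : ℝ) / (m + 2) < min c r₀ :=
        lt_of_le_of_lt (one_div_le_one_div_of_le (by positivity) (by linarith)) hm
      refine ⟨m, subset_closure fun r hr => ?_⟩
      obtain ⟨y, hy⟩ := H r ⟨hr.1, hr.2.trans (hm2.trans_le (min_le_right _ _))⟩
      refine ⟨y, (ball_subset_ball ?_).trans hy⟩
      exact mul_le_mul_of_nonneg_right (hm2.le.trans (min_le_left _ _)) hr.1.le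
    · rintro ⟨m, hm⟩
      have hpos : (0 : ℝ) < 1 / (m + 2) := by positivity
      have hlt : (1 : ℝ) / (m + 2) < 1 := by
        rw [div_lt_one (by positivity)]; linarith [(Nat.cast_nonneg m : (0 : ℝ) ≤ m)]
      refine ⟨1 / (m + 2) / 2, ⟨by linarith, by linarith⟩, 1 / (m + 2), hpos, fun r hr => ?_⟩
      obtain ⟨x', hx', hd⟩ := Metric.mem_closure_iff.1 hm (r / 2) (by linarith [hr.1])
      obtain ⟨y, hy⟩ := hx' (r / 2) ⟨by linarith [hr.1], by linarith [hr.1, hr.2]⟩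
      refine Hole.le_por hr.1 (by linarith) ⟨y, fun u hu => ?_⟩
      have h1 := hy (show u ∈ ball y (1 / (m + 2) * (r / 2)) by
        rwa [show (1 : ℝ) / (m + 2) * (r / 2) = 1 / (m + 2) / 2 * r by ring])
      refine ⟨?_, h1.2⟩
      have h2 := h1.1
      rw [mem_ball] at h2 ⊢
      linarith [dist_triangle u x' x, dist_comm x x']
  rw [hset]
  exact MeasurableSet.iUnion fun _ => isClosed_closure.measurableSet

/-! ### A quantitative covering property of conformal maps -/

theorem IsConformalMap.norm_apply_eq {V : Type*} [NormedAddCommGroup V] [NormedSpace ℝ V]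
    [Nontrivial V] {L : V →L[ℝ] V} (hL : IsConformalMap L) (v : V) : ‖L v‖ = ‖L‖ * ‖v‖ := by
  obtain ⟨c, hc, li, rfl⟩ := hL
  have h : ∀ v, ‖(c • li.toContinuousLinearMap) v‖ = ‖c‖ * ‖v‖ := fun v => by simp [norm_smul]
  rw [h, ContinuousLinearMap.homothety_norm _ h]

/-- If `f` is differentiable on a closed ball with conformal derivatives of norm at least `m`, then
the image of that ball contains a ball of radius `m' * R` for each `m' < m`. Continuity of the derivative
is not needed: given a target `z`, a minimum of `u ↦ ‖f u - z‖ + m' * ‖u - p‖` is a solution of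
`f u = z`, as otherwise moving `u` in the direction `v` with `Df(u) v = z - f u` decreases it. -/
theorem ball_subset_image_closedBall {V : Type*} [NormedAddCommGroup V] [NormedSpace ℝ V]
    [FiniteDimensional ℝ V] [Nontrivial V] {f : V → V} {D : V → V →L[ℝ] V} {p : V} {R m m' : ℝ}
    (hm' : 0 < m') (hmm : m' < m)
    (hf : ∀ u ∈ closedBall p R, HasFDerivAt f (D u) u)
    (hD : ∀ u ∈ closedBall p R, IsConformalMap (D u))
    (hn : ∀ u ∈ closedBall p R, m ≤ ‖D u‖) :
    ball (f p) (m' * R) ⊆ f '' closedBall p R := by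
  intro z hz
  have hR : 0 < R := by
    have := dist_nonneg.trans_lt (mem_ball.1 hz)
    exact pos_of_mul_pos_right this hm'.le
  have : ProperSpace V := FiniteDimensional.proper ℝ V
  have hcont : ContinuousOn (fun u => ‖f u - z‖ + m' * ‖u - p‖) (closedBall p R) := by
    have hfc : ContinuousOn f (closedBall p R) :=
      fun u hu => (hf u hu).continuousAt.continuousWithinAt
    fun_prop
  obtain ⟨u, hu, hmin⟩ := (isCompact_closedBall p R).exists_isMinOn
    ⟨p, mem_closedBall_self hR.le⟩ hcont
  refine ⟨u, hu, ?_⟩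
  by_contra hne
  -- the minimiser lies in the open ball
  have hup : u ∈ ball p R := by
    have h1 := hmin (mem_closedBall_self hR.le)
    simp only [sub_self, norm_zero, mul_zero, add_zero, mem_ofPred_eq] at h1
    rw [mem_ball, dist_comm, dist_eq_norm] at hz
    rw [mem_ball, dist_eq_norm]
    have h2 : m' * ‖u - p‖ < m' * R := by linarith [norm_nonneg (f u - z)]
    exact lt_of_mul_lt_mul_left h2 hm'.le
  obtain ⟨v, hv⟩ : ∃ v, D u v = z - f u :=
    (LinearMap.injective_iff_surjective (f := (D u : V →ₗ[ℝ] V))).1 (hD u hu).injective _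
  have hw : 0 < ‖f u - z‖ := norm_pos_iff.2 (sub_ne_zero.2 hne)
  have hvn : ‖f u - z‖ = ‖D u‖ * ‖v‖ := by
    rw [← (hD u hu).norm_apply_eq v, hv, norm_sub_rev]
  have hv0 : 0 < ‖v‖ := by
    by_contra! h0
    have : ‖v‖ = 0 := le_antisymm h0 (norm_nonneg _)
    rw [this, mul_zero] at hvn
    exact hw.ne' hvn
  have hline : Tendsto (fun t : ℝ => u + t • v) (nhdsWithin 0 (Ioi 0)) (nhds u) := by
    have : Continuous fun t : ℝ => u + t • v := by fun_prop
    simpa using (this.tendsto 0).mono_left nhdsWithin_le_nhds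
  have hε : 0 < (m - m') / 2 := by linarith
  obtain ⟨t, ⟨⟨h1, h2⟩, ht0⟩, ht1⟩ := (((hline.eventually (((hf u hu).isLittleO.def hε).and
    (isOpen_ball.mem_nhds hup))).and self_mem_nhdsWithin).and
    (nhdsWithin_le_nhds (Iio_mem_nhds (zero_lt_one (α := ℝ))))).exists
  have ht : t ∈ Ioo (0 : ℝ) 1 := ⟨ht0, ht1⟩
  have h3 : ‖f u - z‖ + m' * ‖u - p‖ ≤ ‖f (u + t • v) - z‖ + m' * ‖u + t • v - p‖ :=
    hmin (ball_subset_closedBall h2)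
  have h4 : ‖u + t • v - p‖ ≤ ‖u - p‖ + t * ‖v‖ := by
    rw [show u + t • v - p = (u - p) + t • v by abel]
    refine (norm_add_le _ _).trans ?_
    rw [norm_smul, Real.norm_of_nonneg ht.1.le]
  have h5 : ‖f (u + t • v) - z‖ ≤ (m - m') / 2 * (t * ‖v‖) + (1 - t) * ‖f u - z‖ := by
    have e1 : u + t • v - u = t • v := by abel
    rw [e1, map_smul, hv, norm_smul, Real.norm_of_nonneg ht.1.le] at h1
    have e2 : f (u + t • v) - z = (f (u + t • v) - f u - t • (z - f u)) + (1 - t) • (f u - z) := by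
      module
    rw [e2]
    refine (norm_add_le _ _).trans (add_le_add h1 ?_)
    rw [norm_smul, Real.norm_of_nonneg (by linarith [ht.2])]
  have h6 : m * ‖v‖ ≤ ‖f u - z‖ := by rw [hvn]; exact mul_le_mul_of_nonneg_right (hn u hu) hv0.le
  have h7 : t * ((m - m') / 2 * ‖v‖) ≤ 0 := by
    have h8 := mul_le_mul_of_nonneg_left h4 hm'.le
    have h9 := mul_le_mul_of_nonneg_left h6 ht.1.le
    nlinarith
  have : 0 < t * ((m - m') / 2 * ‖v‖) := mul_pos ht.1 (mul_pos hε hv0)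
  linarith

/-! ### Words of a CIFS -/

namespace CIFS

variable {n : ℕ} {E : Type*}

theorem compWord_cons (S : CIFS n E) (e : E) (w : List E) (x : EuclideanSpace ℝ (Fin n)) :
    S.compWord (e :: w) x = S.φ e (S.compWord w x) := rfl

theorem mapsTo_compWord (S : CIFS n E) {A : Set (EuclideanSpace ℝ (Fin n))}
    (hA : ∀ e, MapsTo (S.φ e) A A) (w : List E) : MapsTo (S.compWord w) A A := by
  induction w with
  | nil => exact fun x hx => hx
  | cons e w ih => exact fun x hx => hA e (ih hx)

theorem hasFDerivAt_compWord (S : CIFS n E) (w : List E) {x : EuclideanSpace ℝ (Fin n)}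
    (hx : x ∈ S.W) : HasFDerivAt (S.compWord w) (S.derivWord w x) x := by
  induction w with
  | nil => exact hasFDerivAt_id x
  | cons e w ih => exact (S.hDeriv e _ (S.mapsTo_compWord S.hMapsW w hx)).comp x ih

theorem isConformalMap_derivWord (S : CIFS n E) (w : List E) {x : EuclideanSpace ℝ (Fin n)}
    (hx : x ∈ S.W) : IsConformalMap (S.derivWord w x) := by
  induction w with
  | nil => exact isConformalMap_id
  | cons e w ih => exact (S.hConf e _ (S.mapsTo_compWord S.hMapsW w hx)).comp ih

theorem dist_compWord_le (S : CIFS n E) (w : List E) {x y : EuclideanSpace ℝ (Fin n)}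
    (hx : x ∈ S.W) (hy : y ∈ S.W) :
    dist (S.compWord w x) (S.compWord w y) ≤ S.s ^ w.length * dist x y := by
  induction w with
  | nil => simp [compWord]
  | cons e w ih =>
    rw [compWord_cons, compWord_cons, List.length_cons, pow_succ']
    have h := (S.hLip e).dist_le_mul _ (S.mapsTo_compWord S.hMapsW w hx) _
      (S.mapsTo_compWord S.hMapsW w hy)
    rw [Real.coe_toNNReal _ S.hs.1.le] at h
    calc _ ≤ _ := h
      _ ≤ S.s * (S.s ^ w.length * dist x y) := by gcongr; exact S.hs.1.le
      _ = _ := by ring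

theorem norm_derivWord_le_one (S : CIFS n E) (w : List E) {x : EuclideanSpace ℝ (Fin n)}
    (hx : x ∈ S.W) : ‖S.derivWord w x‖ ≤ 1 := by
  have hL : LipschitzOnWith 1 (S.compWord w) S.W := by
    refine LipschitzOnWith.of_dist_le_mul fun x hx y hy => (S.dist_compWord_le w hx hy).trans ?_
    exact mul_le_mul_of_nonneg_right (pow_le_one₀ S.hs.1.le S.hs.2.le) dist_nonneg
  simpa using (S.hasFDerivAt_compWord w hx).le_of_lipschitzOn (S.hWopen.mem_nhds hx) hL

/-- In dimension `0` the interior of `X` is the only point of the space, contradicting the open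
set condition for two distinct letters. -/
theorem nontrivial_space [Nontrivial E] (S : CIFS n E) :
    Nontrivial (EuclideanSpace ℝ (Fin n)) := by
  by_contra h
  rw [not_nontrivial_iff_subsingleton] at h
  obtain ⟨a, b, hab⟩ := exists_pair_ne E
  have hne : (interior S.X).Nonempty := by
    rw [← closure_nonempty_iff, ← S.hXreg]; exact S.hXconn.nonempty
  obtain ⟨x, hx⟩ := hne
  exact Set.disjoint_left.1 (S.hOSC a b hab) (mem_image_of_mem _ hx)
    (Subsingleton.elim (S.φ b x) (S.φ a x) ▸ mem_image_of_mem _ hx)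

/-- Bounded distortion, extended to the empty word. -/
theorem BDP.exists_forall_word {S : CIFS n E} (h : S.BDP) :
    ∃ K : ℝ, 1 ≤ K ∧ ∀ w : List E, ∀ p ∈ S.W, ∀ q ∈ S.W,
      ‖S.derivWord w p‖ ≤ K * ‖S.derivWord w q‖ := by
  obtain ⟨K, hK, H⟩ := h
  refine ⟨K, hK, fun w p hp q hq => ?_⟩
  by_cases hw : w = []
  · subst hw
    change ‖ContinuousLinearMap.id ℝ _‖ ≤ K * ‖ContinuousLinearMap.id ℝ _‖
    exact le_mul_of_one_le_left (norm_nonneg _) hK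
  · exact H w hw p hp q hq

/-! ### The coding map -/

/-- `π` is the coding map of `S`: `π ω ∈ φ_{ω₁…ωₘ}(X)` for all `m`. -/
def IsCoding (S : CIFS n E) (π : (ℕ → E) → EuclideanSpace ℝ (Fin n)) : Prop :=
  ∀ ω : ℕ → E, ∀ m : ℕ, π ω ∈ S.compWord (List.ofFn fun i : Fin m => ω i) '' S.X

variable {S : CIFS n E} {π : (ℕ → E) → EuclideanSpace ℝ (Fin n)}

theorem IsCoding.mem_X (hπ : S.IsCoding π) (ω : ℕ → E) : π ω ∈ S.X := by
  obtain ⟨x, hx, h⟩ := hπ ω 0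
  rw [← h]
  exact hx

theorem dist_le_of_mem_image {w : List E} {x y : EuclideanSpace ℝ (Fin n)}
    (hx : x ∈ S.compWord w '' S.X) (hy : y ∈ S.compWord w '' S.X) :
    dist x y ≤ S.s ^ w.length * Metric.diam S.X := by
  obtain ⟨a, ha, rfl⟩ := hx
  obtain ⟨b, hb, rfl⟩ := hy
  refine (S.dist_compWord_le w (S.hXW ha) (S.hXW hb)).trans ?_
  exact mul_le_mul_of_nonneg_left (dist_le_diam_of_mem S.hXcompact.isBounded ha hb)
    (pow_nonneg S.hs.1.le _)

theorem tendsto_pow_mul_diam (S : CIFS n E) :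
    Tendsto (fun m : ℕ => S.s ^ m * Metric.diam S.X) atTop (nhds 0) := by
  simpa using (tendsto_pow_atTop_nhds_zero_of_lt_one S.hs.1.le S.hs.2).mul_const (Metric.diam S.X)

theorem IsCoding.dist_le (hπ : S.IsCoding π) {ω τ : ℕ → E} {N : ℕ} (h : ∀ i < N, ω i = τ i) :
    dist (π ω) (π τ) ≤ S.s ^ N * Metric.diam S.X := by
  have h1 := hπ ω N
  have h2 := hπ τ N
  rw [show (fun i : Fin N => ω i) = fun i : Fin N => τ i from funext fun i => h i i.2] at h1
  simpa using dist_le_of_mem_image h1 h2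

theorem IsCoding.eq_phi_shift (hπ : S.IsCoding π) (ω : ℕ → E) :
    π ω = S.φ (ω 0) (π fun k => ω (k + 1)) := by
  refine dist_le_zero.1 (ge_of_tendsto' ((tendsto_pow_mul_diam S).comp (tendsto_add_atTop_nat 1))
    fun m => ?_)
  have h1 := hπ ω (m + 1)
  rw [List.ofFn_succ] at h1
  obtain ⟨x, hx, h2⟩ := hπ (fun k => ω (k + 1)) m
  have h3 : S.φ (ω 0) (π fun k => ω (k + 1)) ∈
      S.compWord (ω 0 :: List.ofFn fun i : Fin m => ω (i + 1)) '' S.X :=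
    ⟨x, hx, by rw [compWord_cons, h2]⟩
  simpa using dist_le_of_mem_image h1 h3

theorem IsCoding.exists_word (hπ : S.IsCoding π) (k : ℕ) (ω : ℕ → E) :
    ∃ w : List E, π ω = S.compWord w (π fun j => ω (j + k)) := by
  induction k generalizing ω with
  | zero => exact ⟨[], rfl⟩
  | succ k ih =>
    obtain ⟨w, hw⟩ := ih fun j => ω (j + 1)
    refine ⟨ω 0 :: w, ?_⟩
    rw [hπ.eq_phi_shift ω, hw]
    rfl

theorem IsCoding.mapsTo_range (hπ : S.IsCoding π) (e : E) :
    MapsTo (S.φ e) (range π) (range π) := by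
  rintro _ ⟨τ, rfl⟩
  exact ⟨fun k => Nat.casesOn k e τ, hπ.eq_phi_shift _⟩

/-! ### Spreading holes from one point to the whole limit set -/

/-- Blow-up argument: if the shift orbit of `ω` is dense and the limit set has holes at `π ω` at
all small scales, then it has holes at every point of its closure, with uniform constants. Given
`ζ` and `r`, an iterate of the shift takes `π ω` to a point `p` close to `ζ`; the corresponding
`φ_w` maps `p` to `π ω`, and the preimage under `φ_w` of a hole near `π ω` contains a hole
near `p`. -/
theorem IsCoding.exists_uniform_hole [Nontrivial E] [TopologicalSpace E] [DiscreteTopology E]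
    (hπ : S.IsCoding π) (hBDP : S.BDP)
    {ω : ℕ → E} (hω : ∀ U : Set (ℕ → E), IsOpen U → U.Nonempty → ∃ k, (fun j => ω (j + k)) ∈ U)
    {c r₀ : ℝ} (hc : c ∈ Ioo (0 : ℝ) 1) (hr₀ : 0 < r₀)
    (H : ∀ r ∈ Ioo (0 : ℝ) r₀, Hole (range π) (π ω) r c) :
    ∃ c' ∈ Ioo (0 : ℝ) 1, ∃ r₁ > (0 : ℝ), ∀ ζ ∈ closure (range π), ∀ r ∈ Ioo (0 : ℝ) r₁,
      Hole (range π) ζ r c' := by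
  have := S.nontrivial_space
  obtain ⟨K, hK, hdist⟩ := hBDP.exists_forall_word
  obtain ⟨δ, hδ, hδW⟩ := S.hXcompact.exists_thickening_subset_open S.hWopen S.hXW
  have hK0 : 0 < K := by linarith
  have hc' : c / (8 * K ^ 2) < 1 / 8 := by
    rw [div_lt_iff₀ (by positivity)]
    nlinarith [hc.2]
  refine ⟨c / (8 * K ^ 2), ⟨div_pos hc.1 (by positivity), by linarith⟩, min r₀ δ,
    lt_min hr₀ hδ, fun ζ hζ r hr => ?_⟩
  have hr0 := hr.1
  obtain ⟨hrr₀, hrδ⟩ := lt_min_iff.1 hr.2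
  -- a point `p` of the orbit close to `ζ`
  obtain ⟨_, ⟨τ, rfl⟩, hτ⟩ := Metric.mem_closure_iff.1 hζ (r / 8) (by linarith)
  obtain ⟨N, hN⟩ := ((tendsto_pow_mul_diam S).eventually
    (Iio_mem_nhds (show (0 : ℝ) < r / 8 by linarith))).exists
  have hopen : IsOpen {σ : ℕ → E | ∀ i < N, σ i = τ i} := by
    have : {σ : ℕ → E | ∀ i < N, σ i = τ i} = ⋂ i ∈ Finset.range N, {σ : ℕ → E | σ i = τ i} := by
      ext; simp
    rw [this]
    exact isOpen_biInter_finset fun i _ =>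
      (isOpen_discrete {τ i}).preimage (continuous_apply (A := fun _ => E) i)
  obtain ⟨k, hk⟩ := hω _ hopen ⟨τ, fun i _ => rfl⟩
  obtain ⟨w, hw⟩ := hπ.exists_word k ω
  set p := π fun j => ω (j + k) with hp
  have hpζ : dist p ζ < r / 4 := by
    have h1 : dist p (π τ) < r / 8 := (hπ.dist_le hk).trans_lt hN
    linarith [dist_triangle p (π τ) ζ, dist_comm ζ (π τ)]
  have hball : ball p r ⊆ S.W := fun u hu => hδW <|
    mem_thickening_iff.2 ⟨p, hπ.mem_X _, (mem_ball.1 hu).trans hrδ⟩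
  have hpW : p ∈ S.W := hball (mem_ball_self hr0)
  set M := ‖S.derivWord w p‖ with hM
  have hM0 : 0 < M := norm_pos_iff.2 (S.isConformalMap_derivWord w hpW).ne_zero
  have hM1 : M ≤ 1 := S.norm_derivWord_le_one w hpW
  -- a hole near `π ω`, at a scale for which its center is in the image of `B(p, r / 4)`
  have hρ0 : 0 < M / (2 * K) * (r / 4) := by positivity
  have hρ1 : M / (2 * K) * (r / 4) < r₀ := by
    have : M / (2 * K) ≤ 1 := by
      rw [div_le_one (by positivity)]; linarith
    nlinarith
  obtain ⟨y, hy⟩ := H _ ⟨hρ0, hρ1⟩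
  have hyρ : y ∈ ball (π ω) (M / (2 * K) * (r / 4)) :=
    (hy (mem_ball_self (mul_pos hc.1 hρ0))).1
  have hsub : closedBall p (r / 4) ⊆ S.W := (closedBall_subset_ball (by linarith)).trans hball
  rw [hw] at hyρ
  obtain ⟨z, hz, rfl⟩ := ball_subset_image_closedBall (m := M / K) (by positivity)
    (div_lt_div_of_pos_left hM0 hK0 (by linarith))
    (fun u hu => S.hasFDerivAt_compWord w (hsub hu))
    (fun u hu => S.isConformalMap_derivWord w (hsub hu))
    (fun u hu => by
      rw [div_le_iff₀ hK0, mul_comm]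
      exact hdist w p hpW u (hsub hu)) hyρ
  refine ⟨z, fun u hu => ?_⟩
  rw [mem_ball] at hu
  rw [mem_closedBall] at hz
  have hur : dist u z < r / 8 := by nlinarith
  have hup : u ∈ ball p r := by
    rw [mem_ball]; linarith [dist_triangle u z p]
  have hzp : z ∈ ball p r := by
    rw [mem_ball]; linarith
  refine ⟨?_, fun huJ => ?_⟩
  · rw [mem_ball]; linarith [dist_triangle u z ζ, dist_triangle z p ζ]
  · refine (hy (?_ : S.compWord w u ∈ _)).2 (S.mapsTo_compWord hπ.mapsTo_range w huJ)
    have hmv := (convex_ball p r).norm_image_sub_le_of_norm_hasFDerivWithin_le (C := K * M)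
      (fun q hq => (S.hasFDerivAt_compWord w (hball hq)).hasFDerivWithinAt)
      (fun q hq => hdist w q (hball hq) p hpW) hzp hup
    rw [mem_ball, dist_eq_norm]
    refine hmv.trans_lt ?_
    rw [← dist_eq_norm]
    calc K * M * dist u z < K * M * (c / (8 * K ^ 2) * r) := by gcongr
      _ = c * (M / (2 * K) * (r / 4)) := by field_simp; ring

end CIFS

/-! ### Dense orbits -/

/-- Almost every orbit of an ergodic shift-invariant measure of full support is dense. -/
theorem ae_dense_shift_orbit {E : Type*} [Countable E] [TopologicalSpace E] [DiscreteTopology E]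
    [MeasurableSpace E] [BorelSpace E] (μ : Measure (ℕ → E)) [IsProbabilityMeasure μ]
    (hErg : Ergodic (fun ω k => ω (k + 1)) μ)
    (hsupp : ∀ U : Set (ℕ → E), IsOpen U → U.Nonempty → 0 < μ U) :
    ∀ᵐ ω ∂μ, ∀ U : Set (ℕ → E), IsOpen U → U.Nonempty → ∃ k, (fun j => ω (j + k)) ∈ U := by
  have hB := TopologicalSpace.isBasis_countableBasis (ℕ → E)
  have key : ∀ U ∈ TopologicalSpace.countableBasis (ℕ → E),
      ∀ᵐ ω ∂μ, ∃ k, (fun j => ω (j + k)) ∈ U := by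
    intro U hU
    have hUo := hB.isOpen hU
    set A : Set (ℕ → E) := {ω | ∃ k, (fun j => ω (j + k)) ∈ U} with hA
    have hAo : IsOpen A := by
      have : A = ⋃ k : ℕ, (fun (ω : ℕ → E) j => ω (j + k)) ⁻¹' U := by ext; simp [hA]
      rw [this]
      exact isOpen_iUnion fun k => hUo.preimage (by fun_prop)
    have hsub : (fun (ω : ℕ → E) k => ω (k + 1)) ⁻¹' A ⊆ A := by
      rintro ω ⟨k, hk⟩
      exact ⟨k + 1, hk⟩
    rcases hErg.ae_empty_or_univ_of_preimage_ae_le hAo.measurableSet.nullMeasurableSet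
      (LE.le.eventuallyLE hsub) with h | h
    · have h0 : μ A = 0 := ae_eq_empty.1 h
      have hUA : U ⊆ A := fun ω hω => ⟨0, hω⟩
      exact absurd (measure_mono_null hUA h0)
        (hsupp U hUo (TopologicalSpace.nonempty_of_mem_countableBasis hU)).ne'
    · filter_upwards [h] with ω hω
      exact (iff_of_eq hω).2 trivial
  have := (ae_ball_iff (TopologicalSpace.countable_countableBasis (ℕ → E))).2 key
  filter_upwards [this] with ω hω U hU hne
  obtain ⟨x, hx⟩ := hne
  obtain ⟨V, hV, -, hVU⟩ := hB.exists_subset_of_mem_open hx hU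
  obtain ⟨k, hk⟩ := hω V hV
  exact ⟨k, hVU hk⟩

/-- If the limit set `J = range π` of a CIFS is not porous, or is not
porous at some point of its closure, and `μ` is a shift-invariant ergodic Borel
probability measure on `E^ℕ` with full topological support, then `J` is not porous at
`μ∘π⁻¹`-a.e. point. -/
theorem stmt8 {n : ℕ} {E : Type*} [Countable E] [Nontrivial E]
    [TopologicalSpace E] [DiscreteTopology E]
    [MeasurableSpace E] [BorelSpace E]
    (S : CIFS n E) (hBDP : S.BDP)
    (π : (ℕ → E) → EuclideanSpace ℝ (Fin n))
    (hπ : ∀ ω : ℕ → E, ∀ m : ℕ,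
      π ω ∈ S.compWord (List.ofFn fun i : Fin m => ω i) '' S.X)
    (hπmeas : Measurable π)
    (hnp : ¬ Porous (Set.range π) ∨
      ∃ ζ ∈ closure (Set.range π), ¬ PorousAt (Set.range π) ζ)
    (μ : Measure (ℕ → E)) [IsProbabilityMeasure μ]
    (hErg : Ergodic (fun ω k => ω (k + 1)) μ)
    (hsupp : ∀ U : Set (ℕ → E), IsOpen U → U.Nonempty → 0 < μ U) :
    ∀ᵐ x ∂(μ.map π), ¬ PorousAt (Set.range π) x := by
  have := S.nontrivial_space
  refine (ae_map_iff hπmeas.aemeasurable (measurableSet_porousAt (range π)).compl).2 ?_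
  filter_upwards [ae_dense_shift_orbit μ hErg hsupp] with ω hω hpor
  obtain ⟨c, hc, r₀, hr₀, H⟩ := hpor.exists_hole
  obtain ⟨c', hc', r₁, hr₁, H'⟩ :=
    CIFS.IsCoding.exists_uniform_hole (π := π) hπ hBDP hω hc hr₀ H
  rcases hnp with hnp | ⟨ζ, hζ, hnp⟩
  · exact hnp ⟨c', hc', r₁, hr₁, fun x hx r hr =>
      (H' x (subset_closure hx) r hr).le_por hr.1 hc'.1.le⟩
  · exact hnp ⟨c', hc', r₁, hr₁, fun r hr => (H' ζ hζ r hr).le_por hr.1 hc'.1.le⟩
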